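/- Let B be the BlindOracle strategy and let H_B be a colored eviction graph of its run satisfying: any two edges of the same color have the same source vertex; for any two edges (i,j), (i,j') of the same color the evictions of σ(j) and σ(j') do not overlap; and the number of colors is at most OPT. Then the number of edges of H_B satisfies |E(H_B)| ≤ 3η/k + 2·OPT. -/

import Mathlib

namespace Caching

attribute [local instance low] Classical.propDecidable

/-- A run of a feasible eviction strategy on the request sequence `σ` with cache size `k`
and time horizon `T`.  `C t` is the cache after processing request `t` (with `C 0 = ∅`),
and `p t` is the page evicted at time `t` (meaningful at full-cache misses). -/
structure CacheRun (S : Type) [DecidableEq S] (k T : ℕ) (σ : ℕ → S) where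
  C : ℕ → Finset S
  p : ℕ → S
  init : C 0 = ∅
  card_le : ∀ t, (C t).card ≤ k
  hit : ∀ t, 1 ≤ t → t ≤ T → (σ t ∈ C (t - 1) ∨ (C (t - 1)).card < k) →
      C t = insert (σ t) (C (t - 1))
  evict_mem : ∀ t, 1 ≤ t → t ≤ T → σ t ∉ C (t - 1) → (C (t - 1)).card = k →
      p t ∈ C (t - 1)
  evict : ∀ t, 1 ≤ t → t ≤ T → σ t ∉ C (t - 1) → (C (t - 1)).card = k →
      C t = insert (σ t) ((C (t - 1)).erase (p t))

variable {S : Type} [DecidableEq S]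

/- `nextReq σ T t` is `ν(t)`: the first time `s > t` (with `s ≤ T`) at which the page
`σ t` is requested again, and `T + 1` if there is no such time. -/
open Classical in
noncomputable def nextReq (σ : ℕ → S) (T t : ℕ) : ℕ :=
  if h : ∃ s, t < s ∧ s ≤ T ∧ σ s = σ t then Nat.find h else T + 1

/-- The total prediction loss `η = Σ_{t=1}^T |ν(t) - ω(t)|`. -/
noncomputable def totalLoss (σ : ℕ → S) (T : ℕ) (ω : ℕ → ℕ) : ℕ :=
  ∑ t ∈ Finset.Icc 1 T, Nat.dist (nextReq σ T t) (ω t)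

/-- `I_Q(t)`: indices of the last requests (up to time `t`) of the currently cached pages. -/
noncomputable def lastIdx {k T : ℕ} {σ : ℕ → S} (R : CacheRun S k T σ) (t : ℕ) : Finset ℕ :=
  (Finset.Icc 1 t).filter fun i => σ i ∈ R.C t ∧ ∀ j ∈ Finset.Icc (i + 1) t, σ j ≠ σ i

/-- Time `t` is a full-cache miss (an eviction step). -/
def EvictStep {k T : ℕ} {σ : ℕ → S} (R : CacheRun S k T σ) (t : ℕ) : Prop :=
  1 ≤ t ∧ t ≤ T ∧ σ t ∉ R.C (t - 1) ∧ (R.C (t - 1)).card = k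

/-- At time `t` the run evicts the page whose last-request index is `i`. -/
def EvictsIdx {k T : ℕ} {σ : ℕ → S} (R : CacheRun S k T σ) (t i : ℕ) : Prop :=
  EvictStep R t ∧ i ∈ lastIdx R (t - 1) ∧ R.p t = σ i

/-- `OBJ_Q`: the number of cache misses of the run. -/
noncomputable def misses {k T : ℕ} {σ : ℕ → S} (R : CacheRun S k T σ) : ℕ :=
  ((Finset.Icc 1 T).filter fun t => σ t ∉ R.C (t - 1)).card

/-- Belady's algorithm: on a full-cache miss always evict the cached page with the
largest next-request time. -/
def IsBelady {k T : ℕ} {σ : ℕ → S} (A : CacheRun S k T σ) : Prop :=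
  ∀ t, EvictStep A t → ∀ i ∈ lastIdx A (t - 1), A.p t = σ i →
    ∀ j ∈ lastIdx A (t - 1), nextReq σ T j ≤ nextReq σ T i

/-- BlindOracle: on a full-cache miss always evict the cached page with the largest
predicted next-request time. -/
def IsBlindOracle {k T : ℕ} {σ : ℕ → S} (B : CacheRun S k T σ) (ω : ℕ → ℕ) : Prop :=
  ∀ t, EvictStep B t → ∀ i ∈ lastIdx B (t - 1), B.p t = σ i →
    ∀ j ∈ lastIdx B (t - 1), ω j ≤ ω i

/-- An eviction graph of a run: a directed graph on `{1,…,T}` whose every edge `(i, j)`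
corresponds to a distinct time (`time e`) at which the run made a mistake by evicting
page `σ j` while `i` was a strictly better eviction candidate in the cache. -/
structure EvictionGraph {k T : ℕ} {σ : ℕ → S} (R : CacheRun S k T σ) where
  E : Finset (ℕ × ℕ)
  time : ℕ × ℕ → ℕ
  time_inj : ∀ e ∈ E, ∀ e' ∈ E, time e = time e' → e = e'
  mistake : ∀ e ∈ E, EvictsIdx R (time e) e.2 ∧ e.1 ∈ lastIdx R (time e - 1) ∧
      nextReq σ T e.2 < nextReq σ T e.1

/-- The eviction at time `t` triggers the eviction at time `t'`: the page evicted
at `t` is next requested at `t' = ν(i)`, which is again an eviction step. -/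
def Triggers {k T : ℕ} {σ : ℕ → S} (R : CacheRun S k T σ) (t t' : ℕ) : Prop :=
  ∃ i, EvictsIdx R t i ∧ t' = nextReq σ T i ∧ ∃ j, EvictsIdx R t' j

/-- The eviction of the page with last-request index `i` triggers the eviction of the
page with last-request index `j` (at time `ν(i)`). -/
def TriggersIdx {k T : ℕ} {σ : ℕ → S} (R : CacheRun S k T σ) (i j : ℕ) : Prop :=
  (∃ t, EvictsIdx R t i) ∧ EvictsIdx R (nextReq σ T i) j

/-- The page requested at time `t` was never requested before. -/
def NewPage (σ : ℕ → S) (t : ℕ) : Prop := ∀ s, 1 ≤ s → s < t → σ s ≠ σ t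

/-- At time `t` the evicted page has the largest prediction among cached pages. -/
def BlindChoiceAt {k T : ℕ} {σ : ℕ → S} (R : CacheRun S k T σ) (ω : ℕ → ℕ) (t : ℕ) : Prop :=
  ∀ i ∈ lastIdx R (t - 1), R.p t = σ i → ∀ j ∈ lastIdx R (t - 1), ω j ≤ ω i

/-- Corrector's choice at time `t`: if some cached page has a provably wrong prediction
(`ω i < t`), evict such a page with minimal prediction; otherwise act as BlindOracle. -/
def CorrectorChoiceAt {k T : ℕ} {σ : ℕ → S} (R : CacheRun S k T σ) (ω : ℕ → ℕ) (t : ℕ) :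
    Prop :=
  ((∃ i ∈ lastIdx R (t - 1), ω i < t) →
    ∀ i ∈ lastIdx R (t - 1), R.p t = σ i →
      ω i < t ∧ ∀ j ∈ lastIdx R (t - 1), ω j < t → ω i ≤ ω j) ∧
  ((¬ ∃ i ∈ lastIdx R (t - 1), ω i < t) → BlindChoiceAt R ω t)

/-- The page requested at time `t` was last evicted (before `t`) at a step labeled with
strategy `s₀` (0 = BlindOracle, 1 = RandomAlg, 2 = Corrector). -/
def LastEvictedWith {k T : ℕ} {σ : ℕ → S} (R : CacheRun S k T σ) (strat : ℕ → Fin 3)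
    (t : ℕ) (s₀ : Fin 3) : Prop :=
  ∃ t₀, t₀ < t ∧ EvictStep R t₀ ∧ R.p t₀ = σ t ∧ strat t₀ = s₀ ∧
    ∀ t₁, t₀ < t₁ → t₁ < t → ¬(EvictStep R t₁ ∧ R.p t₁ = σ t)

/-- A run of the AlternatingOracle strategy (for a fixed realization of its random
choices), together with the labeling `strat` of which of the three strategies was used
at each eviction step: on a miss for a never-requested page use BlindOracle; if the
requested page was last evicted by BlindOracle use RandomAlg (an arbitrary cached page);
if by RandomAlg use Corrector; if by Corrector use BlindOracle. -/
def IsAlternatingOracle {k T : ℕ} {σ : ℕ → S} (R : CacheRun S k T σ) (ω : ℕ → ℕ)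
    (strat : ℕ → Fin 3) : Prop :=
  ∀ t, EvictStep R t →
    (NewPage σ t → strat t = 0 ∧ BlindChoiceAt R ω t) ∧
    (LastEvictedWith R strat t 0 → strat t = 1) ∧
    (LastEvictedWith R strat t 1 → strat t = 2 ∧ CorrectorChoiceAt R ω t) ∧
    (LastEvictedWith R strat t 2 → strat t = 0 ∧ BlindChoiceAt R ω t)

/-- AlternatingOracle driven by a seed `u` of uniform random values: at each eviction
step performed by RandomAlg at time `t`, the evicted page is the one whose last-request
index has rank `u t` among the `k` cached indices, so that for a uniformly random seed
the evicted page is uniform over the cache. -/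
def IsAlternatingOracleSeeded {k T : ℕ} {σ : ℕ → S} (R : CacheRun S k T σ) (ω : ℕ → ℕ)
    (strat : ℕ → Fin 3) (u : Fin (T + 1) → Fin k) : Prop :=
  IsAlternatingOracle R ω strat ∧
  ∀ t (h : EvictStep R t), strat t = 1 →
    ∀ i ∈ lastIdx R (t - 1), R.p t = σ i →
      ((lastIdx R (t - 1)).filter fun j => j < i).card =
        ((u ⟨t, Nat.lt_succ_of_le h.2.1⟩ : Fin k) : ℕ)

/-- The family of runs is adapted to the seeds: the behavior up to time `t` depends only
on the seed values with index at most `t` (the strategy is online). -/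
def Adapted {k T : ℕ} {σ : ℕ → S} (R : (Fin (T + 1) → Fin k) → CacheRun S k T σ)
    (strat : (Fin (T + 1) → Fin k) → ℕ → Fin 3) : Prop :=
  ∀ u u' t, (∀ s : Fin (T + 1), (s : ℕ) ≤ t → u s = u' s) →
    (R u).C t = (R u').C t ∧ (R u).p t = (R u').p t ∧ strat u t = strat u' t

/-- The probability of the outcome `x` for `T` i.i.d. Bernoulli(γ) random bits. -/
noncomputable def bernWeight (γ : ℝ) {T : ℕ} (x : Fin T → Bool) : ℝ :=
  ∏ i, if x i then γ else 1 - γ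

/-- `S(x, m)`: the number of ones among the first `m` coordinates of `x`. -/
noncomputable def scount {T : ℕ} (x : Fin T → Bool) (m : ℕ) : ℕ :=
  (Finset.univ.filter fun i : Fin T => (i : ℕ) < m ∧ x i).card

/-!
Run BlindOracle `B` next to an arbitrary run `A` and compare the last-request indices cached by `A`
only with those cached by `B` only. An eviction of `B` moves its largest prediction to the `A` side
or out of the `B` side, so matching every index of the `A` side with one of the `B` side of no
larger prediction survives. It is damaged only when `A` misses and `B` hits; exempting one index of
the `A` side from the matching repairs it.

Up to boundary terms, a page that `B` evicts and later reloads is either missed by `A` as well, or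
exempt, or kept by `A` and matched; the first two kinds together number at most the evictions of
`A`. For the third kind put `K = ⌈k/3⌉` and charge each such index `j` its overprediction and the
times `τ` at which only `A` caches it while `ω j` and `ν j` are at most `τ + K`. At each `τ` the
matching provides as many indices predicted by time `τ + K`, each returning after `τ + K`
(underpredicted) or causing a miss of `A` within `K` steps. If this yields less than `K`, then `B`
evicted `j` shortly before `ν j`, when all `k` predictions in its cache were at most `ω j`; few of
those pages can return by time `ν j - 2 + K`, so the underprediction at that time covers the rest.
Summing over time bounds `K` times the number of these indices by the loss plus `K` times the
number of evictions of `A`.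
-/

section CountDominated

open Finset

variable {ι β : Type*} [LinearOrder β] {f : ι → β} {s s' t t' : Finset ι}

/-- Below every threshold, `s` has at most as many elements as `t`: equivalently, `s` can be
matched into `t` so that `f` does not increase along the matching. -/
def CountDominated (f : ι → β) (s t : Finset ι) : Prop :=
  ∀ θ, #{i ∈ s | f i ≤ θ} ≤ #{i ∈ t | f i ≤ θ}

lemma CountDominated.mono (h : CountDominated f s t) (hs : s' ⊆ s) (ht : t ⊆ t') :
    CountDominated f s' t' := fun θ =>
  (card_le_card (filter_subset_filter _ hs)).trans
    ((h θ).trans (card_le_card (filter_subset_filter _ ht)))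

variable [DecidableEq ι]

lemma CountDominated.of_insert_erase {v : ι} (h : CountDominated f s t) (hs : s' ⊆ insert v s)
    (ht : t.erase v ⊆ t') (hmax : ∀ i ∈ t', f i ≤ f v) (hcard : #s' ≤ #t') :
    CountDominated f s' t' := by
  intro θ
  rcases le_or_gt (f v) θ with hθ | hθ
  · rw [filter_true_of_mem fun i hi => (hmax i hi).trans hθ]
    exact (card_filter_le _ _).trans hcard
  · refine le_trans (card_le_card fun i hi => ?_) ((h θ).trans (card_le_card fun i hi => ?_))
    all_goals
      rw [mem_filter] at hi ⊢
      have hne : i ≠ v := by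
        rintro rfl
        exact hθ.not_ge hi.2
    · exact ⟨(mem_insert.1 (hs hi.1)).resolve_left hne, hi.2⟩
    · exact ⟨ht (mem_erase.2 ⟨hne, hi.1⟩), hi.2⟩

lemma CountDominated.erase_erase {a : ι} (h : CountDominated f s t) (ha : a ∈ s)
    (hmin : ∀ i ∈ s, f a ≤ f i) (b : ι) : CountDominated f (s.erase a) (t.erase b) := by
  intro θ
  rw [filter_erase, filter_erase]
  rcases le_or_gt (f a) θ with hθ | hθ
  · rw [card_erase_of_mem (mem_filter.2 ⟨ha, hθ⟩)]
    exact (Nat.sub_le_sub_right (h θ) 1).trans pred_card_le_card_erase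
  · rw [filter_false_of_mem fun i hi => (hθ.trans_le (hmin i hi)).not_ge]
    simp only [erase_empty, card_empty, zero_le]

lemma CountDominated.exists_sdiff_erase (h : CountDominated f s t) (b : ι) :
    ∃ c : Finset ι, #c ≤ 1 ∧ CountDominated f (s \ c) (t.erase b) := by
  rcases s.eq_empty_or_nonempty with rfl | hs
  · exact ⟨∅, Nat.zero_le _, fun θ => by simp⟩
  · obtain ⟨a, ha, hmin⟩ := exists_min_image s f hs
    exact ⟨{a}, (card_singleton a).le, by
      simpa only [sdiff_singleton_eq_erase] using h.erase_erase ha hmin b⟩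

end CountDominated

section NextReq

open Finset

variable {σ : ℕ → S} {T i t : ℕ}

lemma nextReq_le_add_one : nextReq σ T i ≤ T + 1 := by
  unfold nextReq
  split_ifs with h
  · exact (Nat.find_spec h).2.1.trans T.le_succ
  · exact le_rfl

lemma nextReq_spec (h : nextReq σ T i ≤ T) :
    i < nextReq σ T i ∧ σ (nextReq σ T i) = σ i := by
  unfold nextReq at h ⊢
  split_ifs at h ⊢ with hex
  · exact ⟨(Nat.find_spec hex).1, (Nat.find_spec hex).2.2⟩
  · omega

lemma lt_nextReq_iff (ht : t ≤ T) :
    t < nextReq σ T i ↔ ∀ j, i < j → j ≤ t → σ j ≠ σ i := by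
  constructor
  · intro h j hij hjt hj
    have hex : ∃ s, i < s ∧ s ≤ T ∧ σ s = σ i := ⟨j, hij, hjt.trans ht, hj⟩
    rw [nextReq, dif_pos hex] at h
    exact Nat.find_min hex (hjt.trans_lt h) ⟨hij, hjt.trans ht, hj⟩
  · intro h
    by_contra! hle
    have hspec := nextReq_spec (hle.trans ht)
    exact h _ hspec.1 hle hspec.2

lemma nextReq_injOn : Set.InjOn (nextReq σ T) {i | nextReq σ T i ≤ T} := by
  intro i (hi : nextReq σ T i ≤ T) j (hj : nextReq σ T j ≤ T) hij
  wlog hlt : i < j generalizing i j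
  · by_contra hne
    exact hne (this hj hi hij.symm (by omega)).symm
  obtain ⟨hj', hσj⟩ := nextReq_spec hj
  refine absurd ?_ ((lt_nextReq_iff (hj'.le.trans hj)).1 (hij ▸ hj') j hlt le_rfl)
  rw [← hσj, ← hij, (nextReq_spec hi).2]

end NextReq

section CacheRun

open Finset

variable {k T : ℕ} {σ : ℕ → S} (R A B : CacheRun S k T σ) {t t' : ℕ}

lemma cache_succ_of_not_evictStep (ht : t + 1 ≤ T) (h : ¬EvictStep R (t + 1)) :
    R.C (t + 1) = insert (σ (t + 1)) (R.C t) := by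
  refine R.hit (t + 1) t.succ_pos ht ?_
  by_contra! hmiss
  exact h ⟨t.succ_pos, ht, hmiss.1, (R.card_le t).antisymm hmiss.2⟩

lemma cache_succ_of_evictStep (h : EvictStep R (t + 1)) :
    R.C (t + 1) = insert (σ (t + 1)) ((R.C t).erase (R.p (t + 1))) :=
  R.evict (t + 1) h.1 h.2.1 h.2.2.1 h.2.2.2

lemma request_mem_cache (ht : t + 1 ≤ T) : σ (t + 1) ∈ R.C (t + 1) := by
  by_cases h : EvictStep R (t + 1)
  · rw [cache_succ_of_evictStep R h]
    exact mem_insert_self _ _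
  · rw [cache_succ_of_not_evictStep R ht h]
    exact mem_insert_self _ _

lemma cache_succ_subset (ht : t + 1 ≤ T) : R.C (t + 1) ⊆ insert (σ (t + 1)) (R.C t) := by
  by_cases h : EvictStep R (t + 1)
  · rw [cache_succ_of_evictStep R h]
    exact insert_subset_insert _ (erase_subset _ _)
  · exact (cache_succ_of_not_evictStep R ht h).subset

lemma card_cache_succ_of_evictStep (h : EvictStep R (t + 1)) : #(R.C (t + 1)) = #(R.C t) := by
  have hp : R.p (t + 1) ∈ R.C t := R.evict_mem (t + 1) h.1 h.2.1 h.2.2.1 h.2.2.2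
  have hmiss : σ (t + 1) ∉ R.C t := h.2.2.1
  rw [cache_succ_of_evictStep R h, card_insert_of_notMem fun hm => hmiss (mem_of_mem_erase hm),
    card_erase_add_one hp]

lemma card_cache_mono (htt' : t ≤ t') (ht' : t' ≤ T) : #(R.C t) ≤ #(R.C t') := by
  induction t', htt' using Nat.le_induction with
  | base => exact le_rfl
  | succ n _ ih =>
    refine (ih (by omega)).trans ?_
    by_cases h : EvictStep R (n + 1)
    · exact (card_cache_succ_of_evictStep R h).ge
    · rw [cache_succ_of_not_evictStep R ht' h]
      exact card_le_card (subset_insert _ _)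

lemma cache_subset_image (ht : t ≤ T) : R.C t ⊆ (Icc 1 t).image σ := by
  induction t with
  | zero => simp [R.init]
  | succ n ih =>
    rw [← insert_Icc_right_eq_Icc_add_one (by omega), image_insert]
    exact (cache_succ_subset R ht).trans (insert_subset_insert _ (ih (by omega)))

lemma cache_eq_image_of_card_lt (ht : t ≤ T) (hlt : #(R.C t) < k) :
    R.C t = (Icc 1 t).image σ := by
  induction t with
  | zero => simp [R.init]
  | succ n ih =>
    have hlt' : #(R.C n) < k := (card_cache_mono R n.le_succ ht).trans_lt hlt
    rw [← insert_Icc_right_eq_Icc_add_one (by omega), image_insert, ← ih (by omega) hlt']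
    exact cache_succ_of_not_evictStep R ht fun h => hlt'.ne h.2.2.2

lemma cache_eq_of_card_lt (ht : t ≤ T) (hlt : #(A.C t) < k) : A.C t = B.C t := by
  have hA := cache_eq_image_of_card_lt A ht hlt
  have hBA : #(B.C t) ≤ #(A.C t) := hA ▸ card_le_card (cache_subset_image B ht)
  rw [hA, cache_eq_image_of_card_lt B ht (hBA.trans_lt hlt)]

lemma card_cache_eq_of_ne (ht : t ≤ T) (h : A.C t ≠ B.C t) : #(A.C t) = k :=
  (A.card_le t).antisymm (not_lt.1 fun hlt => h (cache_eq_of_card_lt A B ht hlt))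

lemma card_cache_eq (ht : t ≤ T) : #(A.C t) = #(B.C t) := by
  rcases (A.card_le t).lt_or_eq with hA | hA
  · rw [cache_eq_of_card_lt A B ht hA]
  rcases (B.card_le t).lt_or_eq with hB | hB
  · rw [cache_eq_of_card_lt B A ht hB]
  · rw [hA, hB]

/-- The times at which the run evicts a page, as opposed to the misses that fill an empty slot. -/
noncomputable def evictSteps (R : CacheRun S k T σ) : Finset ℕ :=
  {t ∈ Icc 1 T | EvictStep R t}

variable {R} in
lemma mem_evictSteps : t ∈ evictSteps R ↔ EvictStep R t := by
  rw [evictSteps, mem_filter, mem_Icc, and_iff_right_iff_imp]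
  exact fun h => ⟨h.1, h.2.1⟩

lemma card_cache_add_card_evictSteps : #(R.C T) + #(evictSteps R) = misses R := by
  suffices h : ∀ t ≤ T, #(R.C t) + #{s ∈ Icc 1 t | EvictStep R s} =
      #{s ∈ Icc 1 t | σ s ∉ R.C (s - 1)} from h T le_rfl
  simp_rw [card_filter]
  intro t ht
  induction t with
  | zero => simp [R.init]
  | succ n ih =>
    rw [sum_Icc_succ_top (by omega), sum_Icc_succ_top (by omega), ← ih (by omega),
      Nat.add_sub_cancel]
    by_cases h : EvictStep R (n + 1)
    · have hmiss : σ (n + 1) ∉ R.C n := h.2.2.1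
      rw [if_pos h, if_pos hmiss, card_cache_succ_of_evictStep R h, add_assoc]
    · rw [if_neg h, cache_succ_of_not_evictStep R ht h, card_insert_eq_ite]
      split_ifs <;> omega

end CacheRun

section LastIdx

open Finset

variable {k T : ℕ} {σ : ℕ → S} {R : CacheRun S k T σ} {i j t t' : ℕ}

lemma mem_lastIdx_iff (ht : t ≤ T) :
    i ∈ lastIdx R t ↔ 1 ≤ i ∧ i ≤ t ∧ σ i ∈ R.C t ∧ t < nextReq σ T i := by
  simp only [lastIdx, mem_filter, mem_Icc, lt_nextReq_iff ht, Nat.succ_le_iff, and_imp, and_assoc]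

lemma nextReq_eq_of_request_eq (ht : t + 1 ≤ T) (hi : i ∈ lastIdx R t) (h : σ (t + 1) = σ i) :
    nextReq σ T i = t + 1 := by
  obtain ⟨-, hit, -, hlt⟩ := (mem_lastIdx_iff (by omega)).1 hi
  by_contra hne
  exact (lt_nextReq_iff ht).1 (by omega) (t + 1) (by omega) le_rfl h

lemma injOn_lastIdx (ht : t ≤ T) : Set.InjOn σ (lastIdx R t) := by
  intro i hi j hj hij
  obtain ⟨-, hit, -, hi'⟩ := (mem_lastIdx_iff ht).1 hi
  obtain ⟨-, hjt, -, hj'⟩ := (mem_lastIdx_iff ht).1 hj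
  rcases lt_trichotomy i j with h | h | h
  · exact absurd hij.symm ((lt_nextReq_iff ht).1 hi' j h hjt)
  · exact h
  · exact absurd hij ((lt_nextReq_iff ht).1 hj' i h hit)

lemma image_lastIdx (ht : t ≤ T) : (lastIdx R t).image σ = R.C t := by
  ext p
  simp only [mem_image]
  constructor
  · rintro ⟨i, hi, rfl⟩
    exact ((mem_lastIdx_iff ht).1 hi).2.2.1
  · intro hp
    obtain ⟨j, hj, hjp⟩ := mem_image.1 (cache_subset_image R ht hp)
    obtain ⟨i, hi, hmax⟩ := exists_max_image {j ∈ Icc 1 t | σ j = p} id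
      ⟨j, mem_filter.2 ⟨hj, hjp⟩⟩
    simp only [mem_filter, mem_Icc, id] at hi hmax
    refine ⟨i, (mem_lastIdx_iff ht).2 ⟨hi.1.1, hi.1.2, hi.2 ▸ hp, ?_⟩, hi.2⟩
    refine (lt_nextReq_iff ht).2 fun l hil hlt hl => ?_
    exact hil.not_ge (hmax l ⟨⟨by omega, hlt⟩, hl.trans hi.2⟩)

lemma card_lastIdx (ht : t ≤ T) : #(lastIdx R t) = #(R.C t) := by
  rw [← image_lastIdx ht, card_image_of_injOn (injOn_lastIdx ht)]

lemma request_mem_cache_iff (ht : t + 1 ≤ T) :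
    σ (t + 1) ∈ R.C t ↔ ∃ i ∈ lastIdx R t, nextReq σ T i = t + 1 := by
  rw [← image_lastIdx (by omega), mem_image]
  refine exists_congr fun i => and_congr_right fun hi => ⟨fun h => ?_, fun h => ?_⟩
  · exact nextReq_eq_of_request_eq ht hi h.symm
  · rw [← (nextReq_spec (h.trans_le ht)).2, h]

lemma EvictStep.exists_evictsIdx (h : EvictStep R t) : ∃ i, EvictsIdx R t i := by
  have hp := R.evict_mem t h.1 h.2.1 h.2.2.1 h.2.2.2
  have := h.2.1
  rw [← image_lastIdx (by omega)] at hp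
  obtain ⟨i, hi, hip⟩ := mem_image.1 hp
  exact ⟨i, h, hi, hip.symm⟩

lemma add_one_mem_lastIdx (ht : t + 1 ≤ T) : t + 1 ∈ lastIdx R (t + 1) :=
  (mem_lastIdx_iff ht).2 ⟨by omega, le_rfl, request_mem_cache R ht,
    (lt_nextReq_iff ht).2 fun _ h h' => absurd h h'.not_gt⟩

lemma mem_lastIdx_succ_iff (ht : t + 1 ≤ T) (hi : i ≠ t + 1) :
    i ∈ lastIdx R (t + 1) ↔
      i ∈ lastIdx R t ∧ nextReq σ T i ≠ t + 1 ∧ ¬EvictsIdx R (t + 1) i := by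
  rw [mem_lastIdx_iff ht, mem_lastIdx_iff (by omega)]
  constructor
  · rintro ⟨h1, hle, hmem, hlt⟩
    have hit : i ≤ t := by omega
    have hne : σ i ≠ σ (t + 1) :=
      ((lt_nextReq_iff ht).1 hlt (t + 1) (by omega) le_rfl).symm
    refine ⟨⟨h1, hit, ?_, by omega⟩, hlt.ne', fun hev => ?_⟩
    · exact (mem_insert.1 (cache_succ_subset R ht hmem)).resolve_left hne
    · rw [cache_succ_of_evictStep R hev.1, hev.2.2] at hmem
      exact notMem_erase _ _ ((mem_insert.1 hmem).resolve_left hne)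
  · rintro ⟨⟨h1, hit, hmem, hlt⟩, hν, hev⟩
    refine ⟨h1, by omega, ?_, by omega⟩
    by_cases h : EvictStep R (t + 1)
    · rw [cache_succ_of_evictStep R h]
      refine mem_insert_of_mem (mem_erase.2 ⟨fun hp => hev ⟨h, ?_, hp.symm⟩, hmem⟩)
      exact (mem_lastIdx_iff (by omega)).2 ⟨h1, hit, hmem, hlt⟩
    · rw [cache_succ_of_not_evictStep R ht h]
      exact mem_insert_of_mem hmem

lemma mem_lastIdx_of_le (hi : i ∈ lastIdx R t') (hit : i ≤ t) (htt' : t ≤ t') (ht' : t' ≤ T) :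
    i ∈ lastIdx R t := by
  induction t', htt' using Nat.le_induction with
  | base => exact hi
  | succ n htn ih => exact ih ((mem_lastIdx_succ_iff ht' (by omega)).1 hi).1 (by omega)

lemma EvictStep.lt_nextReq (h : EvictStep R t) (hi : i ∈ lastIdx R (t - 1)) :
    t < nextReq σ T i := by
  obtain ⟨n, rfl⟩ := Nat.exists_eq_add_of_le' h.1
  have ht : n + 1 ≤ T := h.2.1
  have hn := ((mem_lastIdx_iff (Nat.le_of_succ_le ht)).1 hi).2.2.2
  refine lt_of_le_of_ne hn fun hν => h.2.2.1 ?_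
  exact (request_mem_cache_iff ht).2 ⟨i, hi, hν.symm⟩

lemma EvictsIdx.lt (h : EvictsIdx R t i) : i < t := by
  have := h.1.1
  have := h.1.2.1
  have := ((mem_lastIdx_iff (by omega)).1 h.2.1).2.1
  omega

lemma EvictsIdx.notMem_lastIdx (h : EvictsIdx R t i) (htt' : t ≤ t') (ht' : t' ≤ T) :
    i ∉ lastIdx R t' := by
  intro hi
  have hlt := h.lt
  obtain ⟨n, rfl⟩ := Nat.exists_eq_add_of_le' h.1.1
  have hmem := mem_lastIdx_of_le hi hlt.le htt' ht'
  exact ((mem_lastIdx_succ_iff (by omega) hlt.ne).1 hmem).2.2 h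

lemma EvictsIdx.time_unique (h : EvictsIdx R t i) (h' : EvictsIdx R t' i) : t = t' := by
  wlog hlt : t < t' generalizing t t'
  · by_contra hne
    exact hne (this h' h (by omega)).symm
  have := h'.1.2.1
  exact absurd h'.2.1 (h.notMem_lastIdx (by omega) (by omega))

end LastIdx

section Credit

open Finset

variable {k T : ℕ} {σ : ℕ → S} {A B : CacheRun S k T σ} {ω : ℕ → ℕ} {i t : ℕ}

lemma card_lastIdx_sdiff_comm (ht : t ≤ T) :
    #(lastIdx A t \ lastIdx B t) = #(lastIdx B t \ lastIdx A t) :=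
  card_sdiff_comm (by rw [card_lastIdx ht, card_lastIdx ht, card_cache_eq A B ht])

lemma mem_lastIdx_sdiff_or_evictsIdx (ht : t + 1 ≤ T)
    (hi : i ∈ lastIdx A (t + 1) \ lastIdx B (t + 1)) :
    i ∈ lastIdx A t \ lastIdx B t ∨ EvictsIdx B (t + 1) i := by
  rw [mem_sdiff] at hi
  have hit : i ≠ t + 1 := by
    rintro rfl
    exact hi.2 (add_one_mem_lastIdx ht)
  simp only [mem_lastIdx_succ_iff ht hit] at hi
  rw [mem_sdiff]
  tauto

lemma mem_lastIdx_sdiff_succ (ht : t + 1 ≤ T) (hi : i ∈ lastIdx B t \ lastIdx A t)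
    (hν : nextReq σ T i ≠ t + 1) (hev : ¬EvictsIdx B (t + 1) i) :
    i ∈ lastIdx B (t + 1) \ lastIdx A (t + 1) := by
  rw [mem_sdiff] at hi
  have hit := ((mem_lastIdx_iff (by omega)).1 hi.1).2.1
  rw [mem_sdiff, mem_lastIdx_succ_iff ht (by omega), mem_lastIdx_succ_iff ht (by omega)]
  tauto

lemma CountDominated.succ_of_evictsIdx (hB : IsBlindOracle B ω) {cr : Finset ℕ} {v : ℕ}
    (h : CountDominated ω ((lastIdx A t \ lastIdx B t) \ cr) (lastIdx B t \ lastIdx A t))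
    (hv : EvictsIdx B (t + 1) v) :
    CountDominated ω ((lastIdx A (t + 1) \ lastIdx B (t + 1)) \ cr)
      (lastIdx B (t + 1) \ lastIdx A (t + 1)) := by
  have ht := hv.1.2.1
  refine h.of_insert_erase (v := v) (fun i hi => ?_) (fun i hi => ?_) (fun i hi => ?_) ?_
  · rw [mem_sdiff] at hi
    rw [mem_insert, mem_sdiff]
    rcases mem_lastIdx_sdiff_or_evictsIdx ht hi.1 with hi' | hi'
    · exact Or.inr ⟨hi', hi.2⟩
    · exact Or.inl (injOn_lastIdx (by omega) hi'.2.1 hv.2.1 (hi'.2.2.symm.trans hv.2.2))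
  · obtain ⟨hne, hi⟩ := mem_erase.1 hi
    have hiB := (mem_sdiff.1 hi).1
    refine mem_lastIdx_sdiff_succ ht hi (hv.1.lt_nextReq hiB).ne' fun hev => hne ?_
    exact injOn_lastIdx (by omega) hiB hv.2.1 (hev.2.2.symm.trans hv.2.2)
  · obtain ⟨hiB, hiA⟩ := mem_sdiff.1 hi
    have hit : i ≠ t + 1 := by
      rintro rfl
      exact hiA (add_one_mem_lastIdx ht)
    exact hB _ hv.1 v hv.2.1 hv.2.2 i ((mem_lastIdx_succ_iff ht hit).1 hiB).1
  · exact (card_le_card sdiff_subset).trans (card_lastIdx_sdiff_comm ht).le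

lemma CountDominated.exists_credit_succ (hB : IsBlindOracle B ω) (ht : t + 1 ≤ T) {cr : Finset ℕ}
    (h : CountDominated ω ((lastIdx A t \ lastIdx B t) \ cr) (lastIdx B t \ lastIdx A t)) :
    ∃ cr', cr ⊆ cr' ∧ #cr' ≤ #cr + (if σ (t + 1) ∉ A.C t ∧ σ (t + 1) ∈ B.C t then 1 else 0) ∧
      CountDominated ω ((lastIdx A (t + 1) \ lastIdx B (t + 1)) \ cr')
        (lastIdx B (t + 1) \ lastIdx A (t + 1)) := by
  by_cases hev : EvictStep B (t + 1)
  · obtain ⟨v, hv⟩ := hev.exists_evictsIdx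
    exact ⟨cr, Subset.rfl, Nat.le_add_right _ _, h.succ_of_evictsIdx hB hv⟩
  have hsub : lastIdx A (t + 1) \ lastIdx B (t + 1) ⊆ lastIdx A t \ lastIdx B t := fun i hi =>
    (mem_lastIdx_sdiff_or_evictsIdx ht hi).resolve_right fun hi' => hev hi'.1
  by_cases hreq : ∃ b ∈ lastIdx B t \ lastIdx A t, nextReq σ T b = t + 1
  · obtain ⟨b, hb, hbν⟩ := hreq
    obtain ⟨hbB, hbA⟩ := mem_sdiff.1 hb
    have huniq : ∀ i, nextReq σ T i = t + 1 → i = b := fun i hi =>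
      nextReq_injOn (hi.trans_le ht) (hbν.trans_le ht) (hi.trans hbν.symm)
    have hmiss : σ (t + 1) ∉ A.C t := fun hmem => by
      obtain ⟨i, hiA, hiν⟩ := (request_mem_cache_iff ht).1 hmem
      exact hbA (huniq i hiν ▸ hiA)
    have hhit : σ (t + 1) ∈ B.C t := (request_mem_cache_iff ht).2 ⟨b, hbB, hbν⟩
    obtain ⟨c, hc, hdom⟩ := h.exists_sdiff_erase b
    refine ⟨cr ∪ c, subset_union_left, ?_, ?_⟩
    · rw [if_pos ⟨hmiss, hhit⟩]
      exact (card_union_le _ _).trans (Nat.add_le_add_left hc _)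
    · rw [← sup_eq_union, ← sdiff_sdiff_left]
      refine hdom.mono (sdiff_subset_sdiff (sdiff_subset_sdiff hsub Subset.rfl) Subset.rfl) ?_
      intro i hi
      obtain ⟨hne, hi⟩ := mem_erase.1 hi
      exact mem_lastIdx_sdiff_succ ht hi (fun hiν => hne (huniq i hiν)) fun hi' => hev hi'.1
  · refine ⟨cr, Subset.rfl, Nat.le_add_right _ _, ?_⟩
    exact h.mono (sdiff_subset_sdiff hsub Subset.rfl) fun i hi =>
      mem_lastIdx_sdiff_succ ht hi (fun hiν => hreq ⟨i, hi, hiν⟩) fun hi' => hev hi'.1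

lemma exists_credit (hB : IsBlindOracle B ω) (A : CacheRun S k T σ) (ht : t ≤ T) :
    ∃ cr : Finset ℕ, #cr ≤ #{s ∈ Icc 1 t | σ s ∉ A.C (s - 1) ∧ σ s ∈ B.C (s - 1)} ∧
      ∀ τ ≤ t, CountDominated ω ((lastIdx A τ \ lastIdx B τ) \ cr)
        (lastIdx B τ \ lastIdx A τ) := by
  induction t with
  | zero =>
    refine ⟨∅, Nat.zero_le _, fun τ hτ θ => ?_⟩
    rw [Nat.le_zero.1 hτ]
    simp [lastIdx]
  | succ n ih =>
    obtain ⟨cr, hcard, hdom⟩ := ih (by omega)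
    obtain ⟨cr', hsub, hcard', hdom'⟩ := (hdom n le_rfl).exists_credit_succ hB ht
    refine ⟨cr', ?_, fun τ hτ => ?_⟩
    · rw [card_filter, sum_Icc_succ_top (by omega), ← card_filter, Nat.add_sub_cancel]
      exact hcard'.trans (Nat.add_le_add_right hcard _)
    · rcases Nat.le_succ_iff.1 hτ with hτ | rfl
      · exact (hdom τ hτ).mono (sdiff_subset_sdiff Subset.rfl hsub) Subset.rfl
      · exact hdom'

end Credit

section Window

open Finset

lemma sum_card_window_le {ι : Type*} (s : Finset ι) (a b : ι → ℕ) (K N : ℕ) :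
    ∑ τ ∈ range N, #{x ∈ s | a x ≤ τ + K ∧ τ + K < b x} ≤ ∑ x ∈ s, (b x - a x) := by
  simp_rw [card_filter]
  rw [sum_comm]
  refine sum_le_sum fun x _ => ?_
  rw [← card_filter, ← Nat.card_Ico]
  refine card_le_card_of_injOn (· + K) (fun τ hτ => ?_) (add_left_injective K).injOn
  simpa using (mem_filter.1 hτ).2

variable {k T : ℕ} {σ : ℕ → S} {A B : CacheRun S k T σ} {ω : ℕ → ℕ} {i j t K τ y : ℕ}

/-- The requests already predicted to return by time `y` that return only later. Every such
request contributes to the loss once for each time `y` of the gap. -/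
noncomputable def underpredicted (σ : ℕ → S) (T : ℕ) (ω : ℕ → ℕ) (y : ℕ) : Finset ℕ :=
  {x ∈ Icc 1 T | ω x ≤ y ∧ y < nextReq σ T x}

/-- The pages cached by `B` but not by `A` at time `τ`, as last-request indices, that are
requested again within the next `K` steps and hence make `A` evict there. -/
noncomputable def imminent (A B : CacheRun S k T σ) (K τ : ℕ) : Finset ℕ :=
  {x ∈ lastIdx B τ \ lastIdx A τ | nextReq σ T x ≤ τ + K}

lemma evictStep_nextReq (hfull : #(A.C t) = k) (hit : i ≤ t) (hi : i ∉ lastIdx A t)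
    (htν : t < nextReq σ T i) (hν : nextReq σ T i ≤ T) : EvictStep A (nextReq σ T i) := by
  obtain ⟨n, hn⟩ := Nat.exists_eq_add_of_le' (Nat.one_le_of_lt htν)
  rw [hn] at htν hν ⊢
  refine ⟨by omega, hν, fun hmem => hi ?_, (A.card_le n).antisymm ?_⟩
  · obtain ⟨x, hx, hxν⟩ := (request_mem_cache_iff hν).1 hmem
    obtain rfl : x = i := nextReq_injOn (hxν.trans_le hν) (hn.trans_le hν) (hxν.trans hn.symm)
    exact mem_lastIdx_of_le hx hit (by omega) (by omega)
  · exact hfull.ge.trans (card_cache_mono A (by omega) (by omega))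

lemma card_cache_eq_of_mem_lastIdx_sdiff (ht : t ≤ T) (hi : i ∈ lastIdx B t \ lastIdx A t) :
    #(A.C t) = k := by
  obtain ⟨hiB, hiA⟩ := mem_sdiff.1 hi
  refine card_cache_eq_of_ne A B ht fun hAB => hiA ?_
  rwa [mem_lastIdx_iff ht, hAB, ← mem_lastIdx_iff ht]

lemma card_imminent_le (hτ : τ + K ≤ T) :
    #(imminent A B K τ) ≤ #{r ∈ evictSteps A | r ≤ τ + K ∧ τ + K < r + K} := by
  have hν : ∀ x ∈ imminent A B K τ, nextReq σ T x ≤ τ + K := fun x hx => (mem_filter.1 hx).2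
  refine card_le_card_of_injOn (nextReq σ T) (fun x hx => mem_filter.2 ?_) ?_
  · have hmem := (mem_filter.1 hx).1
    obtain ⟨hxB, hxA⟩ := mem_sdiff.1 hmem
    obtain ⟨-, hle, -, hlt⟩ := (mem_lastIdx_iff (by omega)).1 hxB
    have hfull := card_cache_eq_of_mem_lastIdx_sdiff (by omega) hmem
    have hev := evictStep_nextReq hfull hle hxA hlt ((hν x hx).trans hτ)
    exact ⟨mem_evictSteps.2 hev, hν x hx, by omega⟩
  · exact nextReq_injOn.mono fun x hx => (hν x hx).trans hτ

lemma sum_card_imminent_le (A B : CacheRun S k T σ) (K : ℕ) :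
    ∑ τ ∈ range (T + 1 - K), #(imminent A B K τ) ≤ K * #(evictSteps A) := by
  calc ∑ τ ∈ range (T + 1 - K), #(imminent A B K τ)
      ≤ ∑ τ ∈ range (T + 1 - K), #{r ∈ evictSteps A | r ≤ τ + K ∧ τ + K < r + K} :=
        sum_le_sum fun τ hτ => card_imminent_le (by have := mem_range.1 hτ; omega)
    _ ≤ ∑ r ∈ evictSteps A, (r + K - r) := sum_card_window_le _ _ _ _ _
    _ = K * #(evictSteps A) := by
        simp only [Nat.add_sub_cancel_left, sum_const, smul_eq_mul, mul_comm]

lemma card_le_card_underpredicted_add_card_imminent (hτ : τ ≤ T) {s cr : Finset ℕ}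
    (hdom : CountDominated ω ((lastIdx A τ \ lastIdx B τ) \ cr) (lastIdx B τ \ lastIdx A τ))
    (hs : s ⊆ (lastIdx A τ \ lastIdx B τ) \ cr) (hω : ∀ j ∈ s, ω j ≤ τ + K) :
    #s ≤ #(underpredicted σ T ω (τ + K)) + #(imminent A B K τ) := by
  calc #s ≤ #{x ∈ (lastIdx A τ \ lastIdx B τ) \ cr | ω x ≤ τ + K} :=
        card_le_card fun j hj => mem_filter.2 ⟨hs hj, hω j hj⟩
    _ ≤ #{x ∈ lastIdx B τ \ lastIdx A τ | ω x ≤ τ + K} := hdom (τ + K)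
    _ ≤ #(underpredicted σ T ω (τ + K) ∪ imminent A B K τ) := card_le_card fun x hx => ?_
    _ ≤ _ := card_union_le _ _
  obtain ⟨hx, hωx⟩ := mem_filter.1 hx
  obtain ⟨h1, hxτ, -⟩ := (mem_lastIdx_iff hτ).1 (mem_sdiff.1 hx).1
  rw [mem_union]
  rcases lt_or_ge (τ + K) (nextReq σ T x) with h | h
  · exact Or.inl (mem_filter.2 ⟨mem_Icc.2 ⟨h1, by omega⟩, hωx, h⟩)
  · exact Or.inr (mem_filter.2 ⟨hx, h⟩)

lemma le_card_underpredicted_add (hB : IsBlindOracle B ω) (hj : EvictsIdx B t j)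
    (hω : ω j ≤ y) (hyT : y ≤ T) : k ≤ #(underpredicted σ T ω y) + (y - t) := by
  have ht := hj.1.2.1
  have hmem : ∀ x ∈ lastIdx B (t - 1), x ∈ Icc 1 T ∧ ω x ≤ y := fun x hx => by
    obtain ⟨h1, hxt, -⟩ := (mem_lastIdx_iff (by omega)).1 hx
    exact ⟨mem_Icc.2 ⟨h1, by omega⟩, (hB t hj.1 j hj.2.1 hj.2.2 x hx).trans hω⟩
  calc k = #(lastIdx B (t - 1)) := by rw [card_lastIdx (by omega), hj.1.2.2.2]
    _ = #{x ∈ lastIdx B (t - 1) | y < nextReq σ T x} +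
          #{x ∈ lastIdx B (t - 1) | ¬y < nextReq σ T x} :=
        (card_filter_add_card_filter_not _).symm
    _ ≤ #(underpredicted σ T ω y) + #(Ioc t y) := Nat.add_le_add ?_ ?_
    _ = #(underpredicted σ T ω y) + (y - t) := by rw [Nat.card_Ioc]
  · refine card_le_card fun x hx => ?_
    obtain ⟨hx, hxν⟩ := mem_filter.1 hx
    exact mem_filter.2 ⟨(hmem x hx).1, (hmem x hx).2, hxν⟩
  · refine card_le_card_of_injOn (nextReq σ T) (fun x hx => ?_) (nextReq_injOn.mono fun x hx => ?_)
    all_goals obtain ⟨hx, hxν⟩ := mem_filter.1 hx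
    · exact mem_coe.2 (mem_Ioc.2 ⟨hj.1.lt_nextReq hx, not_lt.1 hxν⟩)
    · exact (not_lt.1 hxν).trans hyT

end Window

section Charging

open Finset

variable {k T : ℕ} {σ : ℕ → S} {A B : CacheRun S k T σ} {ω : ℕ → ℕ} {j t K τ : ℕ}

/-- `B` evicts index `j` at time `t`, whereas `A` keeps it up to its next request, which comes at
least `K - 1` steps before the horizon. -/
structure IsKept (A B : CacheRun S k T σ) (K t j : ℕ) : Prop where
  evictsIdx : EvictsIdx B t j
  nextReq_add_le : nextReq σ T j + K ≤ T + 1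
  mem_lastIdx : j ∈ lastIdx A (nextReq σ T j - 1)

/-- Time `τ` is charged for index `j`: only `A` has it cached, and both its true and its predicted
next request come by time `τ + K`. -/
def Active (ω : ℕ → ℕ) (A B : CacheRun S k T σ) (K τ j : ℕ) : Prop :=
  j ∈ lastIdx A τ \ lastIdx B τ ∧ ω j ≤ τ + K ∧ nextReq σ T j ≤ τ + K

/-- The part of a charge of `K` for index `j` that is covered neither by overpredicting `j` nor by
the times at which `j` is active. -/
noncomputable def deficit (ω : ℕ → ℕ) (A B : CacheRun S k T σ) (K j : ℕ) : ℕ :=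
  K - (ω j - nextReq σ T j) - #{τ ∈ range (T + 1 - K) | Active ω A B K τ j}

lemma IsKept.two_le_nextReq (h : IsKept A B K t j) : 2 ≤ nextReq σ T j := by
  have := h.evictsIdx.1.1
  have := h.evictsIdx.1.lt_nextReq h.evictsIdx.2.1
  omega

lemma IsKept.mem_Icc (h : IsKept A B K t j) : j ∈ Icc 1 T := by
  have hT := h.evictsIdx.1.2.1
  have hlt := h.evictsIdx.lt
  exact Finset.mem_Icc.2 ⟨((mem_lastIdx_iff (by omega)).1 h.evictsIdx.2.1).1, by omega⟩

lemma IsKept.le_card_active (h : IsKept A B K t j) :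
    nextReq σ T j - max t (max (ω j) (nextReq σ T j) - K) ≤
      #{τ ∈ range (T + 1 - K) | Active ω A B K τ j} := by
  have hlt := h.evictsIdx.lt
  have hν := h.nextReq_add_le
  rw [← Nat.card_Ico]
  refine card_le_card fun τ hτ => ?_
  rw [mem_Ico] at hτ
  have hA : j ∈ lastIdx A τ := mem_lastIdx_of_le h.mem_lastIdx (by omega) (by omega) (by omega)
  have hB : j ∉ lastIdx B τ := h.evictsIdx.notMem_lastIdx (by omega) (by omega)
  exact mem_filter.2 ⟨mem_range.2 (by omega), mem_sdiff.2 ⟨hA, hB⟩, by omega, by omega⟩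

lemma IsKept.deficit_add_le (hB : IsBlindOracle B ω) (hK : 3 * K ≤ k + 2)
    (h : IsKept A B K t j) (hpos : 0 < deficit ω A B K j) :
    K + deficit ω A B K j ≤ #(underpredicted σ T ω (nextReq σ T j - 2 + K)) := by
  have hcard := h.le_card_active (ω := ω)
  have hν := h.nextReq_add_le
  have hlt := h.evictsIdx.lt
  have htν := h.evictsIdx.1.lt_nextReq h.evictsIdx.2.1
  -- If `j` is not charged `K` times, it is active throughout `[t, ν j)`, so the deficit is at most
  -- `K - (ν j - t)`, while at most `ν j - t + K - 2` of the `k` pages return by `ν j - 2 + K`.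
  rw [deficit] at hpos ⊢
  have := le_card_underpredicted_add hB h.evictsIdx (y := nextReq σ T j - 2 + K)
    (by omega) (by omega)
  omega

lemma card_active_le (hK : τ + K ≤ T) (J : Finset ℕ) : #{j ∈ J | Active ω A B K τ j} ≤ K := by
  have hact : ∀ j ∈ ({j ∈ J | Active ω A B K τ j} : Finset ℕ), Active ω A B K τ j :=
    fun j hj => (mem_filter.1 hj).2
  calc #{j ∈ J | Active ω A B K τ j} ≤ #(Ioc τ (τ + K)) := ?_
    _ = K := by rw [Nat.card_Ioc, Nat.add_sub_cancel_left]
  refine card_le_card_of_injOn (nextReq σ T) (fun j hj => ?_) ?_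
  · obtain ⟨hmem, -, hν⟩ := hact j hj
    have hlt := ((mem_lastIdx_iff (by omega)).1 (mem_sdiff.1 hmem).1).2.2.2
    exact mem_coe.2 (mem_Ioc.2 ⟨hlt, hν⟩)
  · exact nextReq_injOn.mono fun j hj => (hact j hj).2.2.trans hK

lemma card_active_add_sum_deficit_le (hB : IsBlindOracle B ω) (hK : 3 * K ≤ k + 2)
    {J cr : Finset ℕ} (hJ : ∀ j ∈ J, ∃ t, IsKept A B K t j) (hcr : Disjoint J cr)
    (hdom : CountDominated ω ((lastIdx A τ \ lastIdx B τ) \ cr) (lastIdx B τ \ lastIdx A τ))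
    (hτ : τ + K ≤ T) :
    #{j ∈ J | Active ω A B K τ j} +
        ∑ j ∈ J with nextReq σ T j - 2 = τ, deficit ω A B K j ≤
      #(underpredicted σ T ω (τ + K)) + #(imminent A B K τ) := by
  by_cases hdef : ∃ j ∈ J, nextReq σ T j - 2 = τ ∧ 0 < deficit ω A B K j
  · obtain ⟨j, hj, rfl, hpos⟩ := hdef
    obtain ⟨t, ht⟩ := hJ j hj
    have hsingle : ({i ∈ J | nextReq σ T i - 2 = nextReq σ T j - 2} : Finset ℕ) = {j} := by
      refine eq_singleton_iff_unique_mem.2 ⟨mem_filter.2 ⟨hj, rfl⟩, fun i hi => ?_⟩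
      obtain ⟨hi, hij⟩ := mem_filter.1 hi
      obtain ⟨s, hs⟩ := hJ i hi
      have := hs.two_le_nextReq
      have := ht.two_le_nextReq
      have := hs.nextReq_add_le
      have := ht.nextReq_add_le
      have hKpos : 0 < K := by
        rw [deficit] at hpos
        omega
      exact nextReq_injOn (show nextReq σ T i ≤ T by omega) (show nextReq σ T j ≤ T by omega)
        (by omega)
    rw [hsingle, sum_singleton]
    have := ht.deficit_add_le hB hK hpos
    have := card_active_le (ω := ω) (A := A) (B := B) hτ J
    omega
  · push Not at hdef
    rw [sum_eq_zero fun j hj => Nat.le_zero.1 (hdef j (mem_filter.1 hj).1 (mem_filter.1 hj).2),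
      add_zero]
    refine card_le_card_underpredicted_add_card_imminent (by omega) hdom (fun j hj => ?_)
      fun j hj => (mem_filter.1 hj).2.2.1
    obtain ⟨hj, hact⟩ := mem_filter.1 hj
    exact mem_sdiff.2 ⟨hact.1, disjoint_left.1 hcr hj⟩

lemma totalLoss_eq_add : totalLoss σ T ω =
    ∑ x ∈ Icc 1 T, (nextReq σ T x - ω x) + ∑ x ∈ Icc 1 T, (ω x - nextReq σ T x) := by
  rw [← sum_add_distrib]
  rfl

lemma mul_card_le_totalLoss_add (hB : IsBlindOracle B ω) (hK : 3 * K ≤ k + 2)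
    {J cr : Finset ℕ} (hJ : ∀ j ∈ J, ∃ t, IsKept A B K t j) (hcr : Disjoint J cr)
    (hdom : ∀ τ ≤ T,
      CountDominated ω ((lastIdx A τ \ lastIdx B τ) \ cr) (lastIdx B τ \ lastIdx A τ)) :
    K * #J ≤ totalLoss σ T ω + K * #(evictSteps A) := by
  have hover : ∑ j ∈ J, (ω j - nextReq σ T j) ≤ ∑ x ∈ Icc 1 T, (ω x - nextReq σ T x) :=
    sum_le_sum_of_subset fun j hj => (hJ j hj).elim fun _ h => h.mem_Icc
  have hactive : ∑ j ∈ J, #{τ ∈ range (T + 1 - K) | Active ω A B K τ j} =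
      ∑ τ ∈ range (T + 1 - K), #{j ∈ J | Active ω A B K τ j} :=
    (sum_card_bipartiteAbove_eq_sum_card_bipartiteBelow (Active ω A B K)).symm
  have hmaps : ∀ j ∈ J, nextReq σ T j - 2 ∈ range (T + 1 - K) := fun j hj => by
    obtain ⟨t, ht⟩ := hJ j hj
    have := ht.two_le_nextReq
    have := ht.nextReq_add_le
    exact mem_range.2 (by omega)
  have hdeficit : ∑ j ∈ J, deficit ω A B K j =
      ∑ τ ∈ range (T + 1 - K), ∑ j ∈ J with nextReq σ T j - 2 = τ, deficit ω A B K j :=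
    (sum_fiberwise_of_maps_to hmaps _).symm
  calc K * #J = ∑ _ ∈ J, K := by rw [sum_const, smul_eq_mul, mul_comm]
    _ ≤ ∑ j ∈ J, ((ω j - nextReq σ T j) + #{τ ∈ range (T + 1 - K) | Active ω A B K τ j} +
          deficit ω A B K j) :=
        sum_le_sum fun j _ => by rw [deficit]; omega
    _ = ∑ j ∈ J, (ω j - nextReq σ T j) +
          ∑ τ ∈ range (T + 1 - K), (#{j ∈ J | Active ω A B K τ j} +
            ∑ j ∈ J with nextReq σ T j - 2 = τ, deficit ω A B K j) := by
        rw [sum_add_distrib, sum_add_distrib, hactive, hdeficit, sum_add_distrib, add_assoc]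
    _ ≤ ∑ x ∈ Icc 1 T, (ω x - nextReq σ T x) +
          ∑ τ ∈ range (T + 1 - K), (#(underpredicted σ T ω (τ + K)) + #(imminent A B K τ)) :=
        Nat.add_le_add hover <| sum_le_sum fun τ hτ => by
          have := mem_range.1 hτ
          exact card_active_add_sum_deficit_le hB hK hJ hcr (hdom τ (by omega)) (by omega)
    _ ≤ totalLoss σ T ω + K * #(evictSteps A) := by
        have hunder := sum_card_window_le (Icc 1 T) ω (nextReq σ T) K (T + 1 - K)
        have himm := sum_card_imminent_le A B K
        rw [sum_add_distrib, totalLoss_eq_add]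
        simp only [underpredicted]
        omega

end Charging

section Reload

open Finset

variable {k T : ℕ} {σ : ℕ → S} {A B : CacheRun S k T σ} {ω : ℕ → ℕ} {j t K : ℕ}

/-- The evictions of a run whose page is requested again, as last-request indices. -/
noncomputable def reloadedIdx (R : CacheRun S k T σ) : Finset ℕ :=
  {j ∈ Icc 1 T | (∃ t, EvictsIdx R t j) ∧ nextReq σ T j ≤ T}

/-- The reloaded indices that `A` still has cached at their next request, unless it falls among the
last `K - 1` requests. -/
noncomputable def keptIdx (A B : CacheRun S k T σ) (K : ℕ) : Finset ℕ :=
  {j ∈ reloadedIdx B | nextReq σ T j + K ≤ T + 1 ∧ j ∈ lastIdx A (nextReq σ T j - 1)}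

lemma mem_reloadedIdx : j ∈ reloadedIdx B ↔ (∃ t, EvictsIdx B t j) ∧ nextReq σ T j ≤ T := by
  rw [reloadedIdx, mem_filter, and_iff_right_iff_imp]
  rintro ⟨⟨t, ht⟩, -⟩
  have hT := ht.1.2.1
  have hlt := ht.lt
  exact mem_Icc.2 ⟨((mem_lastIdx_iff (by omega)).1 ht.2.1).1, by omega⟩

lemma exists_isKept (hj : j ∈ keptIdx A B K) : ∃ t, IsKept A B K t j := by
  obtain ⟨hj, hK, hA⟩ := mem_filter.1 hj
  exact (mem_reloadedIdx.1 hj).1.imp fun _ ht => ⟨ht, hK, hA⟩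

lemma EvictionGraph.card_le_card_reloadedIdx (H : EvictionGraph B) :
    #H.E ≤ #(reloadedIdx B) := by
  refine card_le_card_of_injOn Prod.snd (fun e he => ?_) fun e he e' he' h => ?_
  · obtain ⟨hev, -, hlt⟩ := H.mistake e he
    exact mem_reloadedIdx.2 ⟨⟨_, hev⟩, Nat.lt_succ_iff.1 (hlt.trans_le nextReq_le_add_one)⟩
  · refine H.time_inj e he e' he' ((H.mistake e he).1.time_unique ?_)
    rw [show e.2 = e'.2 from h]
    exact (H.mistake e' he').1

lemma injOn_nextReq_reloadedIdx : Set.InjOn (nextReq σ T) (reloadedIdx B) :=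
  nextReq_injOn.mono fun _ hj => (mem_reloadedIdx.1 hj).2

lemma EvictsIdx.request_notMem_cache (h : EvictsIdx B t j) (hν : nextReq σ T j ≤ T) :
    σ (nextReq σ T j) ∉ B.C (nextReq σ T j - 1) := by
  have htν := h.1.lt_nextReq h.2.1
  obtain ⟨n, hn⟩ := Nat.exists_eq_add_of_le' (Nat.one_le_of_lt htν)
  rw [hn] at htν hν ⊢
  intro hmem
  obtain ⟨i, hi, hiν⟩ := (request_mem_cache_iff hν).1 hmem
  obtain rfl : i = j := nextReq_injOn (hiν.trans_le hν) (hn.trans_le hν) (hiν.trans hn.symm)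
  exact h.notMem_lastIdx (by omega) (by omega) hi

lemma card_late_reloadedIdx_le : #{j ∈ reloadedIdx B | T + 1 < nextReq σ T j + K} ≤ K := by
  calc #{j ∈ reloadedIdx B | T + 1 < nextReq σ T j + K} ≤ #(Ioc (T + 1 - K) T) := ?_
    _ ≤ K := by
      rw [Nat.card_Ioc]
      omega
  refine card_le_card_of_injOn (nextReq σ T) (fun j hj => ?_)
    (injOn_nextReq_reloadedIdx.mono (filter_subset _ _))
  obtain ⟨hj, hlate⟩ := mem_filter.1 hj
  obtain ⟨⟨t, ht⟩, hν⟩ := mem_reloadedIdx.1 hj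
  have htν := ht.1.lt_nextReq ht.2.1
  exact mem_coe.2 (mem_Ioc.2 ⟨by omega, hν⟩)

lemma card_dropped_reloadedIdx_le (A B : CacheRun S k T σ) :
    #{j ∈ reloadedIdx B | j ∉ lastIdx A (nextReq σ T j - 1)} ≤
      #{s ∈ evictSteps A | σ s ∉ B.C (s - 1)} := by
  refine card_le_card_of_injOn (nextReq σ T) (fun j hj => ?_)
    (injOn_nextReq_reloadedIdx.mono (filter_subset _ _))
  obtain ⟨hj, hjA⟩ := mem_filter.1 hj
  obtain ⟨⟨t, ht⟩, hν⟩ := mem_reloadedIdx.1 hj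
  have hlt := ht.lt
  have htν := ht.1.lt_nextReq ht.2.1
  have hfull : k ≤ #(A.C (nextReq σ T j - 1)) := by
    rw [card_cache_eq A B (by omega)]
    exact ht.1.2.2.2.ge.trans (card_cache_mono B (by omega) (by omega))
  have hev := evictStep_nextReq ((A.card_le _).antisymm hfull) (by omega) hjA (by omega) hν
  exact mem_coe.2 (mem_filter.2 ⟨mem_evictSteps.2 hev, ht.request_notMem_cache hν⟩)

lemma card_miss_hit_le (A B : CacheRun S k T σ) :
    #{s ∈ Icc 1 T | σ s ∉ A.C (s - 1) ∧ σ s ∈ B.C (s - 1)} ≤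
      #{s ∈ evictSteps A | σ s ∈ B.C (s - 1)} := by
  refine card_le_card fun s hs => ?_
  obtain ⟨hs, hA, hB⟩ := mem_filter.1 hs
  obtain ⟨h1, hT⟩ := mem_Icc.1 hs
  refine mem_filter.2 ⟨mem_evictSteps.2 ⟨h1, hT, hA, ?_⟩, hB⟩
  exact card_cache_eq_of_ne A B (by omega) fun hAB => hA (hAB ▸ hB)

lemma EvictStep.card_evictSteps_add_le_misses (h : EvictStep B t) (A : CacheRun S k T σ) :
    #(evictSteps A) + k ≤ misses A := by
  have hT := h.2.1
  have hfull : k ≤ #(A.C T) := by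
    rw [card_cache_eq A B le_rfl]
    exact h.2.2.2.ge.trans (card_cache_mono B (by omega) le_rfl)
  rw [← card_cache_add_card_evictSteps A, add_comm]
  exact Nat.add_le_add_right hfull _

lemma card_reloadedIdx_le (A B : CacheRun S k T σ) (K : ℕ) :
    #(reloadedIdx B) ≤
      K + #{s ∈ evictSteps A | σ s ∉ B.C (s - 1)} + #(keptIdx A B K) := by
  calc #(reloadedIdx B)
      ≤ #({j ∈ reloadedIdx B | T + 1 < nextReq σ T j + K} ∪
          {j ∈ reloadedIdx B | j ∉ lastIdx A (nextReq σ T j - 1)} ∪ keptIdx A B K) :=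
        card_le_card fun j hj => by
          simp only [keptIdx, mem_union, mem_filter, hj, true_and, ← not_le]
          tauto
    _ ≤ #{j ∈ reloadedIdx B | T + 1 < nextReq σ T j + K} +
          #{j ∈ reloadedIdx B | j ∉ lastIdx A (nextReq σ T j - 1)} + #(keptIdx A B K) :=
        (card_union_le _ _).trans (Nat.add_le_add_right (card_union_le _ _) _)
    _ ≤ K + #{s ∈ evictSteps A | σ s ∉ B.C (s - 1)} + #(keptIdx A B K) :=
        Nat.add_le_add_right
          (Nat.add_le_add card_late_reloadedIdx_le (card_dropped_reloadedIdx_le A B)) _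

lemma mul_card_reloadedIdx_le (hB : IsBlindOracle B ω) (A : CacheRun S k T σ)
    (hK : 3 * K ≤ k + 2) :
    K * #(reloadedIdx B) ≤ totalLoss σ T ω + 2 * K * misses A := by
  rcases (reloadedIdx B).eq_empty_or_nonempty with hempty | ⟨j, hj⟩
  · simp [hempty]
  obtain ⟨cr, hcr, hdom⟩ := exists_credit hB A le_rfl
  have hcharge : K * #(keptIdx A B K \ cr) ≤ totalLoss σ T ω + K * #(evictSteps A) :=
    mul_card_le_totalLoss_add hB hK (fun j hj => exists_isKept (mem_sdiff.1 hj).1)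
      disjoint_sdiff_self_left hdom
  have htotal : #(reloadedIdx B) + #(evictSteps A) ≤ #(keptIdx A B K \ cr) + 2 * misses A := by
    obtain ⟨t, ht⟩ := (mem_reloadedIdx.1 hj).1
    have hmisses := ht.1.card_evictSteps_add_le_misses A
    have hreload := card_reloadedIdx_le A B K
    have hkept : #(keptIdx A B K) ≤ #(keptIdx A B K \ cr) + #cr := card_le_card_sdiff_add_card
    have hcredit : #cr ≤ #{s ∈ evictSteps A | σ s ∈ B.C (s - 1)} :=
      hcr.trans (card_miss_hit_le A B)
    have hsplit : #{s ∈ evictSteps A | σ s ∈ B.C (s - 1)} +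
        #{s ∈ evictSteps A | σ s ∉ B.C (s - 1)} = #(evictSteps A) :=
      card_filter_add_card_filter_not _
    omega
  linarith [Nat.mul_le_mul_left K htotal]

end Reload

theorem stmt9_general {k T : ℕ} (hk : 1 ≤ k) {σ : ℕ → S} {ω : ℕ → ℕ}
    {B : CacheRun S k T σ} (hB : IsBlindOracle B ω) (A : CacheRun S k T σ) :
    ((reloadedIdx B).card : ℝ) ≤ 3 * totalLoss σ T ω / k + 2 * misses A := by
  obtain ⟨K, hK, hkK⟩ : ∃ K, 3 * K ≤ k + 2 ∧ k ≤ 3 * K := ⟨(k + 2) / 3, by omega, by omega⟩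
  have hK0 : (0 : ℝ) < K := by
    exact_mod_cast (by omega : 0 < K)
  have hbound : (K : ℝ) * (reloadedIdx B).card ≤ totalLoss σ T ω + 2 * K * misses A := by
    exact_mod_cast mul_card_reloadedIdx_le hB A hK
  calc ((reloadedIdx B).card : ℝ) ≤ (totalLoss σ T ω + 2 * K * misses A) / K := by
        rwa [le_div_iff₀' hK0]
    _ = 3 * totalLoss σ T ω / (3 * K : ℝ) + 2 * misses A := by
        field_simp
    _ ≤ 3 * totalLoss σ T ω / k + 2 * misses A := by
        gcongr
        exact_mod_cast hkK

/-- For any colored eviction graph of a run of BlindOracle in which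
same-colored edges share their source, evictions at same-colored edges do not overlap,
and at most `OPT` colors are used, the number of edges is at most `3η/k + 2·OPT`. -/
theorem stmt9 {S : Type} [DecidableEq S] (k T : ℕ) (hk : 1 ≤ k) (σ : ℕ → S) (ω : ℕ → ℕ)
    (B A : CacheRun S k T σ) (hB : IsBlindOracle B ω) (hA : IsBelady A)
    (H : EvictionGraph B) (col : ℕ × ℕ → ℕ) (n : ℕ)
    (hcol : ∀ e ∈ H.E, col e < n)
    (hsrc : ∀ e ∈ H.E, ∀ e' ∈ H.E, col e = col e' → e.1 = e'.1)
    (hover : ∀ e ∈ H.E, ∀ e' ∈ H.E, col e = col e' → H.time e < H.time e' →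
        ∃ t', t' ≤ H.time e' ∧ Triggers B (H.time e) t')
    (hn : n ≤ misses A) :
    (H.E.card : ℝ) ≤ 3 * totalLoss σ T ω / k + 2 * misses A := by
  exact (Nat.cast_le.2 H.card_le_card_reloadedIdx).trans (stmt9_general hk hB A)

end Caching
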